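/- For every r = 1, …, ℓ+1 and every p ∈ ℤ^{ℓ+1}, the q-deformed gl_{ℓ+1}-Whittaker function Ψ_z (extended by zero outside the dominant domain) satisfies the eigenvalue equation (𝓗_r Ψ_z)(p) = e_r(z) · Ψ_z(p), where e_r(z) = Σ_{I ⊆ {1,…,ℓ+1}, |I| = r} ∏_{i∈I} z_i is the r-th elementary symmetric polynomial in z_1,…,z_{ℓ+1}. -/

import Mathlib

open Finset

/-- The `q`-factorial `(n)_q! = ∏_{m=1}^{n} (1 - q^m)` (equal to `1` for `n ≤ 0`). -/
noncomputable def qfac {K : Type*} [Field K] (q : K) (n : ℤ) : K :=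
  ∏ m ∈ Finset.range n.toNat, (1 - q ^ (m + 1))

/-- A Gelfand–Zetlin pattern: a triangular array `g k i = p_{k+1,i+1}` (0-indexed),
satisfying the interlacing conditions `p_{k+1,i} ≥ p_{k,i} ≥ p_{k+1,i+1}`. -/
def IsGZ {n : ℕ} (g : ∀ k : Fin (n + 1), Fin ((k : ℕ) + 1) → ℤ) : Prop :=
  ∀ (k : Fin n) (i : Fin ((k : ℕ) + 1)),
    g k.castSucc i ≤ g k.succ i.castSucc ∧ g k.succ i.succ ≤ g k.castSucc i

/-- The weight of a Gelfand–Zetlin pattern in the explicit formula for the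
`q`-deformed `gl_{n+1}`-Whittaker function. -/
noncomputable def gzWeight {K : Type*} [Field K] (q : K) {n : ℕ} (z : Fin (n + 1) → K)
    (g : ∀ k : Fin (n + 1), Fin ((k : ℕ) + 1) → ℤ) : K :=
  z ⟨0, n.succ_pos⟩ ^ g ⟨0, n.succ_pos⟩ ⟨0, Nat.one_pos⟩ *
  (∏ k : Fin n, z k.succ ^ ((∑ i, g k.succ i) - ∑ i, g k.castSucc i)) *
  (∏ k : Fin n, ∏ i : Fin (k : ℕ), qfac q (g k.castSucc i.castSucc - g k.castSucc i.succ)) *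
  (∏ k : Fin n, ∏ i : Fin ((k : ℕ) + 1),
      (qfac q (g k.succ i.castSucc - g k.castSucc i) *
       qfac q (g k.castSucc i - g k.succ i.succ)))⁻¹

/-- The `q`-deformed `gl_{n+1}`-Whittaker function `Ψ_z(p)`: the sum over all
Gelfand–Zetlin patterns with top row `p` of their weights, if `p` is dominant,
and `0` otherwise. -/
noncomputable def whit {K : Type*} [Field K] (q : K) (n : ℕ) (z : Fin (n + 1) → K)
    (p : Fin (n + 1) → ℤ) : K := by
  classical
  exact if (∀ k : Fin n, p k.succ ≤ p k.castSucc) then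
    ∑ g ∈ (Finset.Icc (fun (k : Fin (n + 1)) (_ : Fin ((k : ℕ) + 1)) => p (Fin.last n))
        (fun (k : Fin (n + 1)) (_ : Fin ((k : ℕ) + 1)) => p ⟨0, n.succ_pos⟩)).filter
        (fun g => IsGZ g ∧ g (Fin.last n) = p),
      gzWeight q z g
  else 0

/-- The normalized `q`-deformed Whittaker function
`Ψ̃_z(p) = (∏_{i=1}^{n} (p_i - p_{i+1})_q!) ⬝ Ψ_z(p)`. -/
noncomputable def nwhit {K : Type*} [Field K] (q : K) (n : ℕ) (z : Fin (n + 1) → K)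
    (p : Fin (n + 1) → ℤ) : K :=
  (∏ i : Fin n, qfac q (p i.castSucc - p i.succ)) * whit q n z p

/-!
Removing the top row `p` of a Gelfand–Zetlin pattern writes `Ψ` for `n + 2` variables as a sum over
rows `m` interlacing `p` of a branching kernel times `Ψ` for `n + 1` variables, with the last
variable `z` entering only through the kernel. The kernel intertwines the Hamiltonians: on it,
`𝓗_{r+1}` acting on `p` equals `𝓗*_{r+1} + z 𝓗*_r` acting on `m`, with `𝓗*` the adjoint. Moving the
adjoints onto `Ψ` and inducting on the number of variables turns this into the recursion
`e_{r+1}(z', z) = e_{r+1}(z') + z e_r(z')`.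

All terms of the intertwining relation are polynomial multiples of one kernel, the polynomials being
sums over subsets `I` and `J` of weights in independent variables. Marking the cardinalities by `T`,
both sums are products of `2 × 2` transfer matrices, and a gauge transformation carries the factors
of one to those of the other, up to a boundary term contributing `1 + T`; the two summands `1` and
`T` are the two terms on the `m` side.
-/

namespace QToda

section TransferMatrix

variable {n : ℕ}

theorem prod_ofFn_semiconj {M : Type*} [Monoid M] (C : Fin (n + 1) → M) (A B : Fin n → M)
    (h : ∀ i, C i.castSucc * A i = B i * C i.succ) :
    C 0 * (List.ofFn A).prod = (List.ofFn B).prod * C (Fin.last n) := by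
  induction n with
  | zero => simp
  | succ n ih =>
    have hstep := ih (fun i => C i.succ) (fun i => A i.succ) (fun i => B i.succ) (h ·.succ)
    have hhead : C 0 * A 0 = B 0 * C (Fin.succ 0) := h 0
    rw [List.ofFn_succ, List.ofFn_succ, List.prod_cons, List.prod_cons, ← mul_assoc, hhead,
      mul_assoc, hstep, mul_assoc, Fin.succ_last]

open Matrix in
theorem prod_ofFn_mulVec_one_apply {α R : Type*} [Fintype α] [DecidableEq α] [CommSemiring R]
    (M : Fin (n + 1) → Matrix α α R) (a : α) :
    ((List.ofFn M).prod *ᵥ 1) a =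
      ∑ s : Fin (n + 1) → α, M 0 a (s 0) * ∏ i : Fin n, M i.succ (s i.castSucc) (s i.succ) := by
  induction n generalizing a with
  | zero =>
    rw [← (Equiv.funUnique (Fin 1) α).symm.sum_comp]
    simp [mulVec, dotProduct]
  | succ n ih =>
    rw [List.ofFn_succ, List.prod_cons, ← mulVec_mulVec, mulVec, dotProduct,
      ← (Fin.consEquiv fun _ => α).sum_comp, Fintype.sum_prod_type]
    refine Fintype.sum_congr _ _ fun b => ?_
    rw [ih (fun i => M i.succ) b, mul_sum]
    refine Fintype.sum_congr _ _ fun s => ?_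
    simp [Fin.consEquiv, Fin.prod_univ_succ (n := n)]

theorem sum_finset_eq_sum_bool {ι M : Type*} [Fintype ι] [DecidableEq ι] [AddCommMonoid M]
    (f : (ι → Bool) → M) : ∑ I : Finset ι, f (fun i => decide (i ∈ I)) = ∑ s, f s :=
  sum_nbij' (fun I i => decide (i ∈ I)) (fun s => univ.filter (s · = true))
    (by simp) (by simp) (by simp) (by simp) (by simp)

theorem pow_card_eq_prod {ι M : Type*} [Fintype ι] [DecidableEq ι] [CommMonoid M] (T : M)
    (I : Finset ι) : T ^ #I = ∏ i, if i ∈ I then T else 1 := by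
  rw [prod_ite_mem, univ_inter, prod_const]

open Polynomial in
theorem coeff_sum_X_pow_card_mul_C {ι R : Type*} [Fintype ι] [Semiring R]
    (f : Finset ι → R) (r : ℕ) :
    (∑ I, X ^ #I * C (f I)).coeff r = ∑ I ∈ powersetCard r univ, f I := by
  simp_rw [finsetSum_coeff, X_pow_mul_C, coeff_C_mul_X_pow, ← sum_filter]
  refine sum_congr ?_ fun _ _ => rfl
  ext I
  simp [eq_comm]

variable {R : Type*} [CommRing R]

/-- The coefficient of the subset `I` in the action of the Toda Hamiltonian on the branching kernel
(`todaCoeff_mul_branchingKernel_add`), with `u i` and `y i` in place of the powers of `q` that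
encode the distances of the `i`-th entry of the lower row from its two neighbours. -/
def raisingWeight (u y : Fin (n + 1) → R) (I : Finset (Fin (n + 2))) : R :=
  ∏ i : Fin (n + 1), (if i.castSucc ∈ I ∧ i.succ ∉ I then 1 - u i * y i else 1) *
    ((if i.castSucc ∈ I then 1 else 1 - u i) * (if i.succ ∈ I then 1 - y i else 1))

/-- The coefficient of the subset `J` in the action of the adjoint Hamiltonian on the branching
kernel (`todaCoeff_mul_branchingKernel_sub`), in the notation of `raisingWeight`. -/
def loweringWeight (u y : Fin (n + 1) → R) (J : Finset (Fin (n + 1))) : R :=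
  (∏ i : Fin n, if i.castSucc ∉ J ∧ i.succ ∈ J then 1 - y i.castSucc * u i.succ else 1) *
    ∏ i : Fin (n + 1), if i ∈ J then 1 - y i else 1 - u i

/-- The transfer matrix of `raisingWeight`: the row and column record whether `i` and `i + 1` lie in
`I`, and `T` marks the elements of `I`. -/
def raisingMatrix (T u y : R) : Matrix Bool Bool R := fun c b =>
  (if b then T else 1) * ((if c ∧ ¬b then 1 - u * y else 1) *
    ((if c then 1 else 1 - u) * if b then 1 - y else 1))

/-- The transfer matrix of `loweringWeight`: the row and column record whether `i - 1` and `i` lie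
in `J`, and `T` marks the elements of `J`. -/
def loweringMatrix (T y u y' : R) : Matrix Bool Bool R := fun c b =>
  (if b then T else 1) * ((if ¬c ∧ b then 1 - y * u else 1) * if b then 1 - y' else 1 - u)

/-- The gauge transformation which, evaluated at consecutive sites, carries `raisingMatrix` to
`loweringMatrix`. -/
def gaugeMatrix (T y : R) : Matrix Bool Bool R := fun c b =>
  if c then (if b then T else 1) else if b then T * (1 - y) else 1 + T * y

theorem gaugeMatrix_mul_raisingMatrix (T y u y' : R) :
    gaugeMatrix T y * raisingMatrix T u y' = loweringMatrix T y u y' * gaugeMatrix T y' := by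
  ext c b
  cases c <;> cases b <;>
    simp [Matrix.mul_apply, gaugeMatrix, raisingMatrix, loweringMatrix] <;> ring

open Matrix in
theorem gaugeMatrix_mulVec_one (T y : R) : gaugeMatrix T y *ᵥ 1 = (1 + T) • 1 := by
  ext c
  cases c
  · simp [mulVec, dotProduct, gaugeMatrix]
    ring
  · simp [mulVec, dotProduct, gaugeMatrix, add_comm]

open Matrix in
theorem sum_pow_card_mul_raisingWeight (T : R) (u y : Fin (n + 1) → R) :
    ∑ I, T ^ #I * raisingWeight u y I = (1 + T) * ∑ J, T ^ #J * loweringWeight u y J := by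
  let y₀ : Fin (n + 2) → R := Fin.cons 0 y
  let A : Fin (n + 1) → Matrix Bool Bool R := fun i => raisingMatrix T (u i) (y i)
  let B : Fin (n + 1) → Matrix Bool Bool R := fun i => loweringMatrix T (y₀ i.castSucc) (u i) (y i)
  have hAB : gaugeMatrix T 0 * (List.ofFn A).prod =
      (List.ofFn B).prod * gaugeMatrix T (y (Fin.last n)) :=
    prod_ofFn_semiconj (fun i => gaugeMatrix T (y₀ i)) A B fun i =>
      gaugeMatrix_mul_raisingMatrix T _ _ _
  have hA : ∑ I, T ^ #I * raisingWeight u y I =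
      ((gaugeMatrix T 0 * (List.ofFn A).prod) *ᵥ 1) true := by
    have hpath := prod_ofFn_mulVec_one_apply (Fin.cons (gaugeMatrix T 0) A) true
    rw [List.ofFn_cons, List.prod_cons] at hpath
    rw [hpath, ← sum_finset_eq_sum_bool]
    refine Fintype.sum_congr _ _ fun I => ?_
    rw [pow_card_eq_prod, Fin.prod_univ_succ, raisingWeight, mul_assoc, ← prod_mul_distrib]
    simp only [A, gaugeMatrix, raisingMatrix, Fin.cons_zero, Fin.cons_succ, decide_eq_true_eq,
      if_true]
  have hB : ∑ J, T ^ #J * loweringWeight u y J = ((List.ofFn B).prod *ᵥ 1) true := by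
    rw [prod_ofFn_mulVec_one_apply, ← sum_finset_eq_sum_bool]
    refine Fintype.sum_congr _ _ fun J => ?_
    rw [pow_card_eq_prod, loweringWeight, mul_left_comm, ← prod_mul_distrib, Fin.prod_univ_succ]
    simp only [B, y₀, loweringMatrix, Fin.castSucc_succ, Fin.cons_succ, decide_eq_true_eq,
      not_true, false_and, if_false, one_mul, prod_mul_distrib]
    ring
  rw [hA, hB, hAB, ← mulVec_mulVec, gaugeMatrix_mulVec_one, mulVec_smul, Pi.smul_apply, smul_eq_mul]

open Polynomial in
theorem sum_raisingWeight (u y : Fin (n + 1) → R) (r : ℕ) :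
    ∑ I ∈ powersetCard (r + 1) univ, raisingWeight u y I =
      ∑ J ∈ powersetCard (r + 1) univ, loweringWeight u y J +
        ∑ J ∈ powersetCard r univ, loweringWeight u y J := by
  have hraising (I : Finset (Fin (n + 2))) : raisingWeight (fun i => C (u i)) (fun i => C (y i)) I =
      C (raisingWeight u y I) := by
    simp [raisingWeight, map_prod, apply_ite C]
  have hlowering (J : Finset (Fin (n + 1))) :
      loweringWeight (fun i => C (u i)) (fun i => C (y i)) J = C (loweringWeight u y J) := by
    simp [loweringWeight, map_prod, apply_ite C]
  have h := congrArg (coeff · (r + 1))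
    (sum_pow_card_mul_raisingWeight X (fun i => C (u i)) (fun i => C (y i)))
  simp_rw [hraising, hlowering, add_mul, one_mul, coeff_add, coeff_X_mul,
    coeff_sum_X_pow_card_mul_C] at h
  exact h

end TransferMatrix

section QFactorial

variable {K : Type*} [Field K] {q : K}

theorem qfac_add_one (q : K) {n : ℤ} (hn : 0 ≤ n) :
    qfac q (n + 1) = (1 - q ^ (n + 1)) * qfac q n := by
  lift n to ℕ using hn
  rw [qfac, qfac, ← Nat.cast_add_one, Int.toNat_natCast, Int.toNat_natCast, prod_range_succ,
    zpow_natCast, mul_comm]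

/-- The reciprocal `1 / (n)_q!` of the `q`-factorial, extended by zero to `n < 0` as the functional
equation `1 / (n - 1)_q! = (1 - q ^ n) / (n)_q!` requires. -/
noncomputable def invQFac (q : K) (n : ℤ) : K :=
  if n < 0 then 0 else (qfac q n)⁻¹

theorem nonneg_of_invQFac_ne_zero {n : ℤ} (h : invQFac q n ≠ 0) : 0 ≤ n :=
  not_lt.1 fun hn => h (if_pos hn)

theorem invQFac_of_nonneg (q : K) {n : ℤ} (hn : 0 ≤ n) : invQFac q n = (qfac q n)⁻¹ :=
  if_neg hn.not_gt

theorem invQFac_sub_one (hq : ∀ n : ℕ, 1 ≤ n → q ^ n ≠ 1) (n : ℤ) :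
    invQFac q (n - 1) = (1 - q ^ n) * invQFac q n := by
  rcases lt_trichotomy n 0 with hn | rfl | hn
  · rw [invQFac, invQFac, if_pos hn, if_pos (by omega), mul_zero]
  · simp [invQFac]
  · have hqn : 1 - q ^ n ≠ 0 := by
      lift n to ℕ using hn.le
      rw [zpow_natCast, sub_ne_zero]
      exact (hq n (by omega)).symm
    have hsucc := qfac_add_one q (n := n - 1) (by omega)
    rw [sub_add_cancel] at hsucc
    rw [invQFac_of_nonneg q (by omega), invQFac_of_nonneg q hn.le, hsucc, mul_inv,
      mul_inv_cancel_left₀ hqn]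

theorem invQFac_add_ite (hq : ∀ n : ℕ, 1 ≤ n → q ^ n ≠ 1) (n : ℤ) (P : Prop) [Decidable P] :
    invQFac q (n + if P then 1 else 0) =
      (if P then 1 else 1 - q ^ (n + 1)) * invQFac q (n + 1) := by
  split_ifs
  · rw [one_mul]
  · rw [← invQFac_sub_one hq, add_sub_cancel_right, add_zero]

theorem invQFac_sub_ite (hq : ∀ n : ℕ, 1 ≤ n → q ^ n ≠ 1) (n : ℤ) (P : Prop) [Decidable P] :
    invQFac q (n - if P then 1 else 0) = (if P then 1 - q ^ n else 1) * invQFac q n := by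
  split_ifs
  · exact invQFac_sub_one hq n
  · rw [sub_zero, one_mul]

/-- The product `∏ (m_i - m_{i+1})_q!` over consecutive entries of a weight. -/
noncomputable def gapQFac {n : ℕ} (q : K) (m : Fin (n + 1) → ℤ) : K :=
  ∏ i : Fin n, qfac q (m i.castSucc - m i.succ)

end QFactorial

section GelfandZetlin

variable {n : ℕ}

/-- Triangular arrays of integers with rows of lengths `1, …, n + 1`, the ambient type of `IsGZ`. -/
abbrev Triangle (n : ℕ) : Type :=
  ∀ k : Fin (n + 1), Fin ((k : ℕ) + 1) → ℤ

/-- The interlacing condition `p_i ≥ m_i ≥ p_{i+1}` between consecutive rows of a Gelfand–Zetlin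
pattern, the lower row `m` being the first argument. -/
def Interlaces (m : Fin (n + 1) → ℤ) (p : Fin (n + 2) → ℤ) : Prop :=
  ∀ i, m i ≤ p i.castSucc ∧ p i.succ ≤ m i

theorem Interlaces.antitone_left {m : Fin (n + 1) → ℤ} {p : Fin (n + 2) → ℤ}
    (h : Interlaces m p) : Antitone m :=
  Fin.antitone_iff_succ_le.2 fun i => (h i.succ).1.trans (h i.castSucc).2

theorem Interlaces.antitone_right {m : Fin (n + 1) → ℤ} {p : Fin (n + 2) → ℤ}
    (h : Interlaces m p) : Antitone p :=
  Fin.antitone_iff_succ_le.2 fun i => (h i).2.trans (h i).1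

theorem interlaces_iff_mem_Icc {m : Fin (n + 1) → ℤ} {p : Fin (n + 2) → ℤ} :
    Interlaces m p ↔ m ∈ Icc (fun i => p i.succ) (fun i => p i.castSucc) := by
  simp only [Interlaces, mem_Icc, Pi.le_def, forall_and, and_comm]

theorem isGZ_succ_iff {g : Triangle (n + 1)} :
    IsGZ g ↔ IsGZ (fun k : Fin (n + 1) => g k.castSucc) ∧
      Interlaces (g (Fin.last n).castSucc) (g (Fin.last (n + 1))) :=
  Fin.forall_fin_succ'

theorem antitone_of_isGZ {g : Triangle n} (hg : IsGZ g) : Antitone (g (Fin.last n)) := by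
  cases n with
  | zero => exact Subsingleton.antitone (α := Fin 1) _
  | succ n => exact (isGZ_succ_iff.1 hg).2.antitone_right

theorem mem_Icc_of_isGZ {g : Triangle n} (hg : IsGZ g) (k : Fin (n + 1)) (i : Fin ((k : ℕ) + 1)) :
    g k i ∈ Set.Icc (g (Fin.last n) (Fin.last n)) (g (Fin.last n) 0) := by
  induction k using Fin.reverseInduction with
  | last =>
    exact ⟨antitone_of_isGZ hg (Fin.le_last i), antitone_of_isGZ hg (Fin.zero_le i)⟩
  | cast k ih => exact ⟨(ih i.succ).1.trans (hg k i).2, (hg k i).1.trans (ih i.castSucc).2⟩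

open scoped Classical in
/-- The Gelfand–Zetlin patterns with top row `p`, cut out of the box over which `whit` sums. -/
noncomputable def gzPatterns (p : Fin (n + 1) → ℤ) : Finset (Triangle n) :=
  {g ∈ Icc (fun _ _ => p (Fin.last n)) (fun _ _ => p 0) | IsGZ g ∧ g (Fin.last n) = p}

theorem mem_gzPatterns {p : Fin (n + 1) → ℤ} {g : Triangle n} :
    g ∈ gzPatterns p ↔ IsGZ g ∧ g (Fin.last n) = p := by
  classical
  rw [gzPatterns, mem_filter, and_iff_right_iff_imp, mem_Icc]
  rintro ⟨hg, rfl⟩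
  exact ⟨fun k i => (mem_Icc_of_isGZ hg k i).1, fun k i => (mem_Icc_of_isGZ hg k i).2⟩

variable {K : Type*} [Field K]

theorem whit_of_not_antitone (q : K) (z : Fin (n + 1) → K) {p : Fin (n + 1) → ℤ}
    (hp : ¬Antitone p) : whit q n z p = 0 := by
  rw [Fin.antitone_iff_succ_le] at hp
  exact if_neg hp

theorem whit_eq_sum_gzPatterns (q : K) (z : Fin (n + 1) → K) (p : Fin (n + 1) → ℤ) :
    whit q n z p = ∑ g ∈ gzPatterns p, gzWeight q z g := by
  by_cases hp : Antitone p
  · exact if_pos (Fin.antitone_iff_succ_le.1 hp)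
  · rw [whit_of_not_antitone q z hp, eq_comm]
    refine sum_eq_zero fun g hg => absurd ?_ hp
    rw [← (mem_gzPatterns.1 hg).2]
    exact antitone_of_isGZ (mem_gzPatterns.1 hg).1

theorem whit_zero_index (q : K) (z : Fin 1 → K) (p : Fin 1 → ℤ) : whit q 0 z p = z 0 ^ p 0 := by
  have hpatterns : gzPatterns p = {fun _ _ => p 0} := by
    ext g
    rw [mem_gzPatterns, mem_singleton]
    constructor
    · rintro ⟨-, rfl⟩
      funext k i
      obtain rfl : k = Fin.last 0 := Subsingleton.elim (α := Fin 1) _ _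
      exact congrArg _ (Subsingleton.elim (α := Fin 1) i 0)
    · rintro rfl
      exact ⟨finZeroElim, funext fun i => congrArg p (Subsingleton.elim (α := Fin 1) 0 i)⟩
  rw [whit_eq_sum_gzPatterns, hpatterns, sum_singleton]
  simp [gzWeight]

/-- The factor `∏ 1 / ((p_i - m_i)_q! (m_i - p_{i+1})_q!)` of a pair of consecutive rows. Since
`invQFac` vanishes on negative integers, it is zero unless `m` interlaces `p`. -/
noncomputable def interlacingFactor (q : K) (p : Fin (n + 2) → ℤ) (m : Fin (n + 1) → ℤ) : K :=
  ∏ i : Fin (n + 1), invQFac q (p i.castSucc - m i) * invQFac q (m i - p i.succ)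

theorem interlaces_of_interlacingFactor_ne_zero {q : K} {p : Fin (n + 2) → ℤ}
    {m : Fin (n + 1) → ℤ} (h : interlacingFactor q p m ≠ 0) : Interlaces m p := fun i => by
  have hi := prod_ne_zero_iff.1 h i (mem_univ i)
  exact ⟨sub_nonneg.1 (nonneg_of_invQFac_ne_zero (left_ne_zero_of_mul hi)),
    sub_nonneg.1 (nonneg_of_invQFac_ne_zero (right_ne_zero_of_mul hi))⟩

theorem interlacingFactor_of_interlaces (q : K) {p : Fin (n + 2) → ℤ} {m : Fin (n + 1) → ℤ}
    (h : Interlaces m p) : interlacingFactor q p m =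
      (∏ i : Fin (n + 1), qfac q (p i.castSucc - m i) * qfac q (m i - p i.succ))⁻¹ := by
  simp only [interlacingFactor, invQFac_of_nonneg q (sub_nonneg.2 (h _).1),
    invQFac_of_nonneg q (sub_nonneg.2 (h _).2), ← mul_inv, prod_inv_distrib]

/-- The kernel of the recursion `whit_succ_index`, which adds a top row `p` above a row `m`. -/
noncomputable def branchingKernel (q z : K) (p : Fin (n + 2) → ℤ) (m : Fin (n + 1) → ℤ) : K :=
  z ^ (∑ i, p i - ∑ i, m i) * gapQFac q m * interlacingFactor q p m

theorem support_branchingKernel_subset (q z : K) (p : Fin (n + 2) → ℤ) :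
    (branchingKernel q z p).support ⊆
      Icc (fun i : Fin (n + 1) => p i.succ) (fun i => p i.castSucc) :=
  fun _ hm => mem_coe.2 <| interlaces_iff_mem_Icc.1 <|
    interlaces_of_interlacingFactor_ne_zero (right_ne_zero_of_mul hm)

theorem hasFiniteSupport_branchingKernel (q z : K) (p : Fin (n + 2) → ℤ) :
    (branchingKernel q z p).HasFiniteSupport :=
  (finite_toSet _).subset (support_branchingKernel_subset q z p)

theorem gzWeight_succ (q : K) (z : Fin (n + 2) → K) {g : Triangle (n + 1)} (hg : IsGZ g) :
    gzWeight q z g =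
      branchingKernel q (z (Fin.last (n + 1))) (g (Fin.last (n + 1))) (g (Fin.last n).castSucc) *
        gzWeight q (fun i => z i.castSucc) fun k : Fin (n + 1) => g k.castSucc := by
  rw [branchingKernel, interlacingFactor_of_interlaces q (isGZ_succ_iff.1 hg).2, gzWeight, gzWeight,
    Fin.prod_univ_castSucc (n := n), Fin.prod_univ_castSucc (n := n),
    Fin.prod_univ_castSucc (n := n), mul_inv]
  -- The index embeddings on the two sides agree only up to unfolding, hence the generic identity.
  have hregroup : ∀ a b c d e f h : K,
      a * (b * c) * (d * e) * (f * h) = c * e * h * (a * b * d * f) := by intros; ring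
  exact hregroup _ _ _ _ _ _ _

theorem whit_succ_index (q : K) (z : Fin (n + 2) → K) (p : Fin (n + 2) → ℤ) :
    whit q (n + 1) z p =
      ∑ᶠ m, branchingKernel q (z (Fin.last (n + 1))) p m * whit q n (fun i => z i.castSucc) m := by
  have hmaps : ∀ g ∈ gzPatterns p, g (Fin.last n).castSucc ∈
      Icc (fun i : Fin (n + 1) => p i.succ) (fun i => p i.castSucc) := by
    intro g hg
    obtain ⟨hgz, rfl⟩ := mem_gzPatterns.1 hg
    exact interlaces_iff_mem_Icc.1 (isGZ_succ_iff.1 hgz).2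
  rw [finsum_eq_sum_of_support_subset _ ((Function.support_mul_subset_left _ _).trans
    (support_branchingKernel_subset q _ p)), whit_eq_sum_gzPatterns,
    ← sum_fiberwise_of_maps_to hmaps]
  refine sum_congr rfl fun m hm => ?_
  rw [whit_eq_sum_gzPatterns, mul_sum]
  refine sum_bij' (fun g _ k => g k.castSucc)
    (fun g _ => Fin.snoc (α := fun k : Fin (n + 2) => Fin ((k : ℕ) + 1) → ℤ) g p) ?_ ?_ ?_ ?_ ?_
  · intro g hg
    obtain ⟨hgp, hgm⟩ := mem_filter.1 hg
    exact mem_gzPatterns.2 ⟨(isGZ_succ_iff.1 (mem_gzPatterns.1 hgp).1).1, hgm⟩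
  · intro g hg
    obtain ⟨hgz, rfl⟩ := mem_gzPatterns.1 hg
    rw [mem_filter, mem_gzPatterns, isGZ_succ_iff]
    simp only [Fin.snoc_castSucc, Fin.snoc_last]
    exact ⟨⟨⟨hgz, interlaces_iff_mem_Icc.2 hm⟩, trivial⟩, trivial⟩
  · intro g hg
    obtain ⟨hgp, -⟩ := mem_filter.1 hg
    rw [← (mem_gzPatterns.1 hgp).2]
    exact Fin.snoc_init_self g
  · intro g _
    exact Fin.init_snoc (α := fun k : Fin (n + 2) => Fin ((k : ℕ) + 1) → ℤ) p g
  · intro g hg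
    obtain ⟨hgp, rfl⟩ := mem_filter.1 hg
    obtain ⟨hgz, rfl⟩ := mem_gzPatterns.1 hgp
    exact gzWeight_succ q z hgz

end GelfandZetlin

section Hamiltonian

variable {n : ℕ} {K : Type*} [Field K]

/-- The indicator vector `∑ i ∈ I, e_i` of `I`. -/
def indicatorVec {ι : Type*} [DecidableEq ι] (I : Finset ι) : ι → ℤ :=
  fun i => if i ∈ I then 1 else 0

theorem sum_indicatorVec {ι : Type*} [Fintype ι] [DecidableEq ι] (I : Finset ι) :
    ∑ i, indicatorVec I i = #I := by
  simp [indicatorVec]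

/-- The coefficient `∏ X̃_{i_a}(p) ^ (1 - δ(i_{a+1} - i_a, 1))` of `f (p + ∑ i ∈ I, e_i)` in the
Toda Hamiltonian. As `X̃` is `1` at the last index, only elements of `I` with a successor outside
`I` contribute. -/
noncomputable def todaCoeff (q : K) (I : Finset (Fin (n + 1))) (p : Fin (n + 1) → ℤ) : K :=
  ∏ i : Fin n, if i.castSucc ∈ I ∧ i.succ ∉ I then 1 - q ^ (p i.castSucc - p i.succ + 1) else 1

theorem prod_mem_eq_todaCoeff (q : K) (I : Finset (Fin (n + 1))) (p : Fin (n + 1) → ℤ) :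
    ∏ i ∈ I, (if h : (i : ℕ) + 1 < n + 1 then
        (if (⟨(i : ℕ) + 1, h⟩ : Fin (n + 1)) ∈ I then 1
         else 1 - q ^ (p i - p ⟨(i : ℕ) + 1, h⟩ + 1)) else 1) = todaCoeff q I p := by
  rw [← prod_ite_mem_eq, Fin.prod_univ_castSucc, dif_neg (by simp), ite_self, mul_one]
  refine prod_congr rfl fun i _ => ?_
  rw [dif_pos (by simp : (i.castSucc : ℕ) + 1 < n + 1)]
  change (if i.castSucc ∈ I then if i.succ ∈ I then (1 : K) else _ else 1) = _
  rw [ite_and, ite_not]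
  rfl

/-- The Hamiltonian `𝓗_r` of the `q`-deformed Toda chain. -/
noncomputable def todaHamiltonian (q : K) (r : ℕ) (f : (Fin (n + 1) → ℤ) → K)
    (p : Fin (n + 1) → ℤ) : K :=
  ∑ I ∈ powersetCard r univ, todaCoeff q I p * f (p + indicatorVec I)

/-- The formal adjoint of `todaHamiltonian` for the pairing `∑ᶠ m, k m * f m`. -/
noncomputable def todaAdjoint (q : K) (r : ℕ) (k : (Fin (n + 1) → ℤ) → K)
    (m : Fin (n + 1) → ℤ) : K :=
  ∑ I ∈ powersetCard r univ, todaCoeff q I (m - indicatorVec I) * k (m - indicatorVec I)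

theorem todaHamiltonian_zero (q : K) (f : (Fin (n + 1) → ℤ) → K) (p : Fin (n + 1) → ℤ) :
    todaHamiltonian q 0 f p = f p := by
  have hvec : indicatorVec (∅ : Finset (Fin (n + 1))) = 0 := rfl
  simp [todaHamiltonian, todaCoeff, hvec]

theorem hasFiniteSupport_todaAdjoint (q : K) (r : ℕ) {k : (Fin (n + 1) → ℤ) → K}
    (hk : k.HasFiniteSupport) : (todaAdjoint q r k).HasFiniteSupport :=
  .sum (fun _ => (hk.fun_comp_of_injective sub_left_injective).fun_mul_right _) _

theorem finsum_todaAdjoint_mul (q : K) (r : ℕ) {k : (Fin (n + 1) → ℤ) → K}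
    (hk : k.HasFiniteSupport) (f : (Fin (n + 1) → ℤ) → K) :
    ∑ᶠ m, todaAdjoint q r k m * f m = ∑ᶠ m, k m * todaHamiltonian q r f m := by
  simp_rw [todaAdjoint, todaHamiltonian, sum_mul, mul_sum]
  rw [finsum_sum_comm, finsum_sum_comm]
  · refine sum_congr rfl fun I _ => ?_
    rw [← finsum_comp_equiv (Equiv.addRight (indicatorVec I))]
    simp_rw [Equiv.coe_addRight, add_sub_cancel_right, mul_left_comm (k _), mul_assoc]
  · exact fun I _ => hk.fun_mul_left _
  · exact fun I _ => ((hk.fun_comp_of_injective sub_left_injective).fun_mul_right _).fun_mul_left _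

end Hamiltonian

section Intertwining

variable {n : ℕ} {K : Type*} [Field K] {q z : K}

/-- The power of `q` measuring the distance of `m_i` from its upper neighbour `p_i`, the variable
`u i` of `raisingWeight`. -/
noncomputable def upperPow (q : K) (p : Fin (n + 2) → ℤ) (m : Fin (n + 1) → ℤ)
    (i : Fin (n + 1)) : K :=
  q ^ (p i.castSucc - m i + 1)

/-- The power of `q` measuring the distance of `m_i` from its lower neighbour `p_{i+1}`, the
variable `y i` of `raisingWeight`. -/
noncomputable def lowerPow (q : K) (p : Fin (n + 2) → ℤ) (m : Fin (n + 1) → ℤ)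
    (i : Fin (n + 1)) : K :=
  q ^ (m i - p i.succ)

/-- The interlacing factor with all upper distances increased by one. Both `interlacingFactor` at
`p + indicatorVec I` and at `m - indicatorVec J` are polynomial multiples of it. -/
noncomputable def raisedInterlacingFactor (q : K) (p : Fin (n + 2) → ℤ) (m : Fin (n + 1) → ℤ) :
    K :=
  ∏ i : Fin (n + 1), invQFac q (p i.castSucc - m i + 1) * invQFac q (m i - p i.succ)

/-- The common factor of all terms of the intertwining relation
`todaHamiltonian_branchingKernel`. -/
noncomputable def raisedKernel (q z : K) (p : Fin (n + 2) → ℤ) (m : Fin (n + 1) → ℤ) : K :=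
  z ^ (∑ i, p i - ∑ i, m i) * gapQFac q m * raisedInterlacingFactor q p m

theorem lowerPow_mul_upperPow {p : Fin (n + 2) → ℤ} {m : Fin (n + 1) → ℤ}
    (h : raisedInterlacingFactor q p m ≠ 0) (i : Fin n) :
    lowerPow q p m i.castSucc * upperPow q p m i.succ = q ^ (m i.castSucc - m i.succ + 1) := by
  have hfactor := prod_ne_zero_iff.1 h
  have hlower := nonneg_of_invQFac_ne_zero
    (right_ne_zero_of_mul (hfactor i.castSucc (mem_univ _)))
  have hupper := nonneg_of_invQFac_ne_zero (left_ne_zero_of_mul (hfactor i.succ (mem_univ _)))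
  rw [Fin.succ_castSucc] at hlower
  rw [lowerPow, upperPow, Fin.succ_castSucc, ← zpow_add' (Or.inr (by omega))]
  ring_nf

theorem todaCoeff_mul_interlacingFactor_add (hq : ∀ n : ℕ, 1 ≤ n → q ^ n ≠ 1)
    (I : Finset (Fin (n + 2))) (p : Fin (n + 2) → ℤ) (m : Fin (n + 1) → ℤ) :
    todaCoeff q I p * interlacingFactor q (p + indicatorVec I) m =
      raisingWeight (upperPow q p m) (lowerPow q p m) I * raisedInterlacingFactor q p m := by
  rw [todaCoeff, interlacingFactor, raisingWeight, raisedInterlacingFactor, ← prod_mul_distrib,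
    ← prod_mul_distrib]
  refine prod_congr rfl fun i _ => ?_
  simp only [Pi.add_apply, indicatorVec, add_sub_right_comm, ← sub_sub, invQFac_add_ite hq,
    invQFac_sub_ite hq, upperPow, lowerPow]
  by_cases hzero : invQFac q (p i.castSucc - m i + 1) * invQFac q (m i - p i.succ) = 0
  · rw [hzero, mul_zero, mul_mul_mul_comm (ite _ _ _), hzero, mul_zero, mul_zero]
  · have hupper := nonneg_of_invQFac_ne_zero (left_ne_zero_of_mul hzero)
    have hlower := nonneg_of_invQFac_ne_zero (right_ne_zero_of_mul hzero)
    rw [← zpow_add' (Or.inr (by omega))]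
    ring_nf

theorem interlacingFactor_sub (hq : ∀ n : ℕ, 1 ≤ n → q ^ n ≠ 1)
    (J : Finset (Fin (n + 1))) (p : Fin (n + 2) → ℤ) (m : Fin (n + 1) → ℤ) :
    interlacingFactor q p (m - indicatorVec J) =
      (∏ i, if i ∈ J then 1 - lowerPow q p m i else 1 - upperPow q p m i) *
        raisedInterlacingFactor q p m := by
  rw [interlacingFactor, raisedInterlacingFactor, ← prod_mul_distrib]
  refine prod_congr rfl fun i _ => ?_
  simp only [Pi.sub_apply, indicatorVec, sub_sub_eq_add_sub, add_sub_right_comm,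
    sub_right_comm (m i), invQFac_add_ite hq, invQFac_sub_ite hq, upperPow, lowerPow]
  split_ifs <;> ring

theorem todaCoeff_mul_gapQFac_sub (q : K) {J : Finset (Fin (n + 1))} {m : Fin (n + 1) → ℤ}
    (hm : Antitone m) (hmJ : Antitone (m - indicatorVec J)) :
    todaCoeff q J (m - indicatorVec J) * gapQFac q (m - indicatorVec J) =
      (∏ i : Fin n, if i.castSucc ∉ J ∧ i.succ ∈ J then
        1 - q ^ (m i.castSucc - m i.succ + 1) else 1) * gapQFac q m := by
  rw [todaCoeff, gapQFac, gapQFac, ← prod_mul_distrib, ← prod_mul_distrib]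
  refine prod_congr rfl fun i _ => ?_
  have hgap : 0 ≤ m i.castSucc - m i.succ := sub_nonneg.2 (hm i.castSucc_le_succ)
  have hgapJ := sub_nonneg.2 (hmJ i.castSucc_le_succ)
  by_cases hi : i.castSucc ∈ J <;> by_cases hi' : i.succ ∈ J <;>
    simp only [Pi.sub_apply, indicatorVec, hi, hi', if_true, if_false, not_true, not_false_iff,
      and_true, and_false, sub_zero, sub_sub_sub_cancel_right, one_mul] at hgapJ ⊢
  · rw [← qfac_add_one q hgapJ, sub_right_comm, sub_add_cancel]
  · rw [sub_sub_eq_add_sub, add_sub_right_comm, qfac_add_one q hgap]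

theorem todaCoeff_mul_branchingKernel_add (hq : ∀ n : ℕ, 1 ≤ n → q ^ n ≠ 1) (hz : z ≠ 0)
    (I : Finset (Fin (n + 2))) (p : Fin (n + 2) → ℤ) (m : Fin (n + 1) → ℤ) :
    todaCoeff q I p * branchingKernel q z (p + indicatorVec I) m =
      z ^ #I * raisingWeight (upperPow q p m) (lowerPow q p m) I * raisedKernel q z p m := by
  have hpow : z ^ (∑ i, (p + indicatorVec I) i - ∑ i, m i) =
      z ^ #I * z ^ (∑ i, p i - ∑ i, m i) := by
    simp_rw [Pi.add_apply, sum_add_distrib, sum_indicatorVec]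
    rw [← zpow_natCast, ← zpow_add₀ hz, add_sub_right_comm, add_comm]
  rw [branchingKernel, raisedKernel, hpow]
  linear_combination (z ^ #I * z ^ (∑ i, p i - ∑ i, m i) * gapQFac q m) *
    todaCoeff_mul_interlacingFactor_add hq I p m

theorem todaCoeff_mul_branchingKernel_sub (hq : ∀ n : ℕ, 1 ≤ n → q ^ n ≠ 1) (hz : z ≠ 0)
    (J : Finset (Fin (n + 1))) (p : Fin (n + 2) → ℤ) {m : Fin (n + 1) → ℤ} (hm : Antitone m) :
    todaCoeff q J (m - indicatorVec J) * branchingKernel q z p (m - indicatorVec J) =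
      z ^ #J * loweringWeight (upperPow q p m) (lowerPow q p m) J * raisedKernel q z p m := by
  have hpow : z ^ (∑ i, p i - ∑ i, (m - indicatorVec J) i) =
      z ^ #J * z ^ (∑ i, p i - ∑ i, m i) := by
    simp_rw [Pi.sub_apply, sum_sub_distrib, sum_indicatorVec]
    rw [← zpow_natCast, ← zpow_add₀ hz, sub_sub_eq_add_sub, add_sub_right_comm, add_comm]
  have hlower := interlacingFactor_sub hq J p m
  rw [branchingKernel, loweringWeight, raisedKernel, hpow]
  by_cases hzero : interlacingFactor q p (m - indicatorVec J) = 0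
  · rw [hzero] at hlower ⊢
    linear_combination (z ^ #J * z ^ (∑ i, p i - ∑ i, m i) * gapQFac q m *
      ∏ i : Fin n, if i.castSucc ∉ J ∧ i.succ ∈ J then
        1 - lowerPow q p m i.castSucc * upperPow q p m i.succ else 1) * hlower
  · have hgap := todaCoeff_mul_gapQFac_sub q hm
      (interlaces_of_interlacingFactor_ne_zero hzero).antitone_left
    simp_rw [← lowerPow_mul_upperPow (right_ne_zero_of_mul (hlower ▸ hzero))] at hgap
    rw [hlower]
    linear_combination (z ^ #J * z ^ (∑ i, p i - ∑ i, m i) * raisedInterlacingFactor q p m *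
      ∏ i, if i ∈ J then 1 - lowerPow q p m i else 1 - upperPow q p m i) * hgap

theorem todaHamiltonian_branchingKernel (hq : ∀ n : ℕ, 1 ≤ n → q ^ n ≠ 1) (hz : z ≠ 0) (r : ℕ)
    (p : Fin (n + 2) → ℤ) {m : Fin (n + 1) → ℤ} (hm : Antitone m) :
    todaHamiltonian q (r + 1) (fun p => branchingKernel q z p m) p =
      todaAdjoint q (r + 1) (branchingKernel q z p) m +
        z * todaAdjoint q r (branchingKernel q z p) m := by
  have hadjoint (s : ℕ) : todaAdjoint q s (branchingKernel q z p) m =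
      z ^ s * (∑ J ∈ powersetCard s univ, loweringWeight (upperPow q p m) (lowerPow q p m) J) *
        raisedKernel q z p m := by
    rw [todaAdjoint, mul_sum, sum_mul]
    refine sum_congr rfl fun J hJ => ?_
    rw [todaCoeff_mul_branchingKernel_sub hq hz J p hm, (mem_powersetCard.1 hJ).2]
  calc todaHamiltonian q (r + 1) (fun p => branchingKernel q z p m) p
    _ = z ^ (r + 1) * (∑ I ∈ powersetCard (r + 1) univ,
          raisingWeight (upperPow q p m) (lowerPow q p m) I) * raisedKernel q z p m := by
      rw [todaHamiltonian, mul_sum, sum_mul]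
      refine sum_congr rfl fun I hI => ?_
      rw [todaCoeff_mul_branchingKernel_add hq hz, (mem_powersetCard.1 hI).2]
    _ = _ := by
      rw [sum_raisingWeight, hadjoint, hadjoint]
      ring

theorem todaHamiltonian_finsum_branchingKernel_mul (hq : ∀ n : ℕ, 1 ≤ n → q ^ n ≠ 1) (hz : z ≠ 0)
    (r : ℕ) (p : Fin (n + 2) → ℤ) {f : (Fin (n + 1) → ℤ) → K} (hf : ∀ m, ¬Antitone m → f m = 0) :
    todaHamiltonian q (r + 1) (fun p => ∑ᶠ m, branchingKernel q z p m * f m) p =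
      ∑ᶠ m, branchingKernel q z p m *
        (todaHamiltonian q (r + 1) f m + z * todaHamiltonian q r f m) := by
  have hkernel (p : Fin (n + 2) → ℤ) := hasFiniteSupport_branchingKernel q z p
  have hadjoint (s : ℕ) := hasFiniteSupport_todaAdjoint q s (hkernel p)
  calc todaHamiltonian q (r + 1) (fun p => ∑ᶠ m, branchingKernel q z p m * f m) p
    _ = ∑ᶠ m, todaHamiltonian q (r + 1) (fun p => branchingKernel q z p m) p * f m := by
      simp_rw [todaHamiltonian, sum_mul, mul_assoc]
      rw [finsum_sum_comm _ _ fun I _ => ((hkernel _).fun_mul_left f).fun_mul_right _]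
      exact sum_congr rfl fun I _ => mul_finsum _ _
    _ = ∑ᶠ m, (todaAdjoint q (r + 1) (branchingKernel q z p) m * f m +
          z * (todaAdjoint q r (branchingKernel q z p) m * f m)) := by
      refine finsum_congr fun m => ?_
      by_cases hm : Antitone m
      · rw [todaHamiltonian_branchingKernel hq hz r p hm, add_mul, mul_assoc]
      · simp only [hf m hm, mul_zero, add_zero]
    _ = ∑ᶠ m, branchingKernel q z p m * todaHamiltonian q (r + 1) f m +
          z * ∑ᶠ m, branchingKernel q z p m * todaHamiltonian q r f m := by
      rw [finsum_add_distrib ((hadjoint _).fun_mul_left f)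
        (((hadjoint _).fun_mul_left f).fun_mul_right _), ← mul_finsum,
        finsum_todaAdjoint_mul q _ (hkernel p), finsum_todaAdjoint_mul q _ (hkernel p)]
    _ = _ := by
      rw [mul_finsum, ← finsum_add_distrib ((hkernel p).fun_mul_left _)
        (((hkernel p).fun_mul_left _).fun_mul_right _)]
      exact finsum_congr fun m => by ring

end Intertwining

section Eigenfunction

theorem esymm_cons {R : Type*} [CommSemiring R] (a : R) (s : Multiset R) (r : ℕ) :
    (a ::ₘ s).esymm (r + 1) = s.esymm (r + 1) + a * s.esymm r := by
  simp [Multiset.esymm, Multiset.powersetCard_cons, Multiset.sum_map_mul_left]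

theorem map_univ_eq_cons_last {α : Type*} {n : ℕ} (z : Fin (n + 1) → α) :
    univ.val.map z = z (Fin.last n) ::ₘ univ.val.map fun i => z (Fin.castSucc i) := by
  rw [Fin.univ_castSuccEmb, cons_val, Multiset.map_cons, map_val, Multiset.map_map]
  rfl

variable {K : Type*} [Field K] {q : K}

theorem todaHamiltonian_whit_zero_index (z : Fin 1 → K) (hz : z 0 ≠ 0) (r : ℕ) (p : Fin 1 → ℤ) :
    todaHamiltonian q r (whit q 0 z) p = (univ.val.map z).esymm r * whit q 0 z p := by
  rw [esymm_map_val, todaHamiltonian, sum_mul]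
  refine sum_congr rfl fun I _ => ?_
  rw [todaCoeff, prod_of_isEmpty, one_mul, whit_zero_index, whit_zero_index, Pi.add_apply,
    zpow_add₀ hz, mul_comm, ← prod_ite_mem_eq, Fin.prod_univ_one, indicatorVec]
  split_ifs <;> simp

theorem todaHamiltonian_whit (hq : ∀ n : ℕ, 1 ≤ n → q ^ n ≠ 1) {n : ℕ} {z : Fin (n + 1) → K}
    (hz : ∀ i, z i ≠ 0) (r : ℕ) (p : Fin (n + 1) → ℤ) :
    todaHamiltonian q r (whit q n z) p = (univ.val.map z).esymm r * whit q n z p := by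
  induction n generalizing r with
  | zero => exact todaHamiltonian_whit_zero_index z (hz 0) r p
  | succ n ih =>
    cases r with
    | zero => simp [todaHamiltonian_zero, Multiset.esymm]
    | succ r =>
      rw [funext (whit_succ_index q z), todaHamiltonian_finsum_branchingKernel_mul hq (hz _) r p
        fun m hm => whit_of_not_antitone q _ hm, map_univ_eq_cons_last, esymm_cons, mul_finsum]
      refine finsum_congr fun m => ?_
      rw [ih (fun i => hz i.castSucc), ih (fun i => hz i.castSucc)]
      ring

end Eigenfunction

end QToda

/-- the `q`-deformed `gl_{ℓ+1}`-Whittaker function is a common eigenfunction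
of the `q`-deformed Toda Hamiltonians `𝓗_r`, with eigenvalue the `r`-th elementary
symmetric polynomial `e_r(z)`. -/
theorem whittaker_toda_eigenfunction {K : Type*} [Field K] (q : K)
    (hq : ∀ n : ℕ, 1 ≤ n → q ^ n ≠ 1) (ℓ : ℕ) (hℓ : 1 ≤ ℓ)
    (z : Fin (ℓ + 1) → K) (hz : ∀ i, z i ≠ 0)
    (r : ℕ) (hr1 : 1 ≤ r) (hr2 : r ≤ ℓ + 1) (p : Fin (ℓ + 1) → ℤ) :
    ∑ I ∈ Finset.powersetCard r (Finset.univ : Finset (Fin (ℓ + 1))),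
      (∏ i ∈ I, (if h : (i : ℕ) + 1 < ℓ + 1 then
          (if (⟨(i : ℕ) + 1, h⟩ : Fin (ℓ + 1)) ∈ I then 1
           else 1 - q ^ (p i - p ⟨(i : ℕ) + 1, h⟩ + 1)) else 1)) *
        whit q ℓ z (fun i => p i + if i ∈ I then 1 else 0)
    = (∑ I ∈ Finset.powersetCard r (Finset.univ : Finset (Fin (ℓ + 1))), ∏ i ∈ I, z i) *
        whit q ℓ z p := by
  rw [← esymm_map_val, ← QToda.todaHamiltonian_whit hq hz]
  refine sum_congr rfl fun I _ => ?_
  rw [QToda.prod_mem_eq_todaCoeff]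
  rfl
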